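/- With the setup of the previous statement, let T be the further compression of S to the subspace (P_N)_0 of polynomials of degree ≤ N vanishing at 0 (spanned by homogeneous polynomials of degrees 1 through N). Then for every homogeneous polynomial p of degree m with 1 ≤ m ≤ N, (I − ∑_{n=1}^N b_n ∑_{|α|=n} (n!/α!) T^α (T*)^α) p = (b_m/a_m) · p. In particular, if this operator is positive semidefinite for all N, then b_n ≥ 0 for all n ≥ 1. -/

import Mathlib

open scoped ComplexOrder

/-- The unitarily invariant inner product on polynomials determined by
`⟨zᵅ, zᵝ⟩ = δ_{αβ} (1/a_{|α|}) α!/|α|!` (conjugate-linear in the first argument). -/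
noncomputable def uiInner (d : ℕ) (a : ℕ → ℝ) (p q : MvPolynomial (Fin d) ℂ) : ℂ :=
  ∑ α ∈ p.support ∪ q.support,
    (starRingEnd ℂ) (MvPolynomial.coeff α p) * MvPolynomial.coeff α q *
      ((((∏ j, Nat.factorial (α j) : ℕ) : ℝ) / (Nat.factorial (∑ j, α j)) / a (∑ j, α j) : ℝ) : ℂ)

namespace UI
open MvPolynomial

/-- weight -/
noncomputable def w {d : ℕ} (a : ℕ → ℝ) (α : Fin d →₀ ℕ) : ℝ :=
  (((∏ j, Nat.factorial (α j) : ℕ) : ℝ) / (Nat.factorial (∑ j, α j)) / a (∑ j, α j) : ℝ)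

lemma w_pos {d : ℕ} {a : ℕ → ℝ} (hap : ∀ k, 0 < a k) (α : Fin d →₀ ℕ) : 0 < w a α := by
  unfold w
  have h1 : 0 < ∏ j, Nat.factorial (α j) := Finset.prod_pos fun j _ => Nat.factorial_pos _
  have h2 := Nat.factorial_pos (∑ j, α j)
  have := hap (∑ j, α j)
  positivity

lemma inner_monomial {d : ℕ} (a : ℕ → ℝ) (p : MvPolynomial (Fin d) ℂ) (β : Fin d →₀ ℕ) (c : ℂ) :
    uiInner d a p (monomial β c) = (starRingEnd ℂ) (coeff β p) * c * ((w a β : ℝ) : ℂ) := by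
  unfold uiInner
  rw [Finset.sum_eq_single β]
  · simp [w]
  · intro α _ h
    simp [coeff_monomial, Ne.symm h]
  · intro h
    simp only [Finset.mem_union, not_or, mem_support_iff, not_not] at h
    simp [h.1]

lemma inner_zero {d : ℕ} (a : ℕ → ℝ) (p : MvPolynomial (Fin d) ℂ) :
    uiInner d a p 0 = 0 := by
  simp [uiInner]

/-- normalized monomial -/
noncomputable def u {d : ℕ} (a : ℕ → ℝ) (γ : Fin d →₀ ℕ) : MvPolynomial (Fin d) ℂ :=
  if γ = 0 then 0 else monomial γ (((w a γ)⁻¹ : ℝ) : ℂ)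

/-- acts as a downward shift -/
def Down {d : ℕ} (N : ℕ) (a : ℕ → ℝ) (A : Module.End ℂ (MvPolynomial (Fin d) ℂ))
    (s : Fin d →₀ ℕ) : Prop :=
  ∀ γ : Fin d →₀ ℕ, γ.degree ≤ N → A (u a γ) = if s ≤ γ then u a (γ - s) else 0

/-- acts as an upward shift -/
def Up {d : ℕ} (N : ℕ) (A : Module.End ℂ (MvPolynomial (Fin d) ℂ))
    (s : Fin d →₀ ℕ) : Prop :=
  ∀ (γ : Fin d →₀ ℕ) (c : ℂ), γ ≠ 0 → γ.degree + s.degree ≤ N →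
    A (monomial γ c) = monomial (γ + s) c

variable {d N : ℕ} {a : ℕ → ℝ}

lemma Down.one : Down (d := d) N a 1 0 := by
  intro γ _; simp

lemma Up.one : Up (d := d) N 1 0 := by
  intro γ _; simp

lemma Down.mul {A B : Module.End ℂ (MvPolynomial (Fin d) ℂ)} {s t : Fin d →₀ ℕ}
    (hA : Down N a A s) (hB : Down N a B t) : Down N a (A * B) (s + t) := by
  intro γ hγ
  rw [Module.End.mul_apply, hB γ hγ]
  by_cases ht : t ≤ γ
  · rw [if_pos ht, hA _ ((Finsupp.degree_mono tsub_le_self).trans hγ), tsub_tsub, add_comm t s]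
    simp only [le_tsub_iff_right ht]
  · rw [if_neg ht, map_zero, if_neg]
    exact fun h => ht (le_trans le_add_self h)

lemma Up.mul {A B : Module.End ℂ (MvPolynomial (Fin d) ℂ)} {s t : Fin d →₀ ℕ}
    (hA : Up N A s) (hB : Up N B t) : Up N (A * B) (s + t) := by
  intro γ c h0 hγ
  rw [map_add] at hγ
  rw [Module.End.mul_apply, hB γ c h0 (by omega), hA _ c (by simp [h0]) (by rw [map_add]; omega),
    add_assoc, add_comm t s]

lemma Down.pow {A : Module.End ℂ (MvPolynomial (Fin d) ℂ)} {s : Fin d →₀ ℕ}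
    (hA : Down N a A s) (k : ℕ) : Down N a (A ^ k) (k • s) := by
  induction k with
  | zero => simpa using Down.one
  | succ k ih => rw [pow_succ, succ_nsmul]; exact ih.mul hA

lemma Up.pow {A : Module.End ℂ (MvPolynomial (Fin d) ℂ)} {s : Fin d →₀ ℕ}
    (hA : Up N A s) (k : ℕ) : Up N (A ^ k) (k • s) := by
  induction k with
  | zero => simpa using Up.one
  | succ k ih => rw [pow_succ, succ_nsmul]; exact ih.mul hA

lemma Down.list {A : Fin d → Module.End ℂ (MvPolynomial (Fin d) ℂ)} {s : Fin d → Fin d →₀ ℕ}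
    (hA : ∀ j, Down N a (A j) (s j)) (l : List (Fin d)) :
    Down N a (l.map A).prod (l.map s).sum := by
  induction l with
  | nil => simpa using Down.one
  | cons j l ih => simpa using (hA j).mul ih

lemma Up.list {A : Fin d → Module.End ℂ (MvPolynomial (Fin d) ℂ)} {s : Fin d → Fin d →₀ ℕ}
    (hA : ∀ j, Up N (A j) (s j)) (l : List (Fin d)) :
    Up N (l.map A).prod (l.map s).sum := by
  induction l with
  | nil => simpa using Up.one
  | cons j l ih => simpa using (hA j).mul ih

lemma shift_sum (α : Fin d → ℕ) :
    ((List.finRange d).map fun j => α j • (Finsupp.single j 1 : Fin d →₀ ℕ)).sum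
      = Finsupp.equivFunOnFinite.symm α := by
  rw [← List.ofFn_eq_map, List.sum_ofFn]
  ext i
  simp [Finsupp.finsetSum_apply, Finsupp.single_apply]

lemma T_monomial (T : Fin d → Module.End ℂ (MvPolynomial (Fin d) ℂ))
    (hT : ∀ (j : Fin d) (p : MvPolynomial (Fin d) ℂ),
      p.totalDegree ≤ N → MvPolynomial.coeff 0 p = 0 →
      T j p = ∑ n ∈ Finset.range (N + 1),
        MvPolynomial.homogeneousComponent n (MvPolynomial.X j * p))
    (j : Fin d) (γ : Fin d →₀ ℕ) (c : ℂ) (h0 : γ ≠ 0) (hγ : γ.degree ≤ N) :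
    T j (monomial γ c) = if γ.degree + 1 ≤ N then monomial (γ + Finsupp.single j 1) c else 0 := by
  have hx : (X j * monomial γ c : MvPolynomial (Fin d) ℂ) = monomial (γ + Finsupp.single j 1) c := by
    rw [X, monomial_mul, one_mul, add_comm]
  rw [hT j _ ((totalDegree_monomial_le _ _).trans hγ) (by simp [coeff_monomial, h0]), hx]
  have hh : ∀ n, homogeneousComponent n (monomial (γ + Finsupp.single j 1) c)
      = if n = γ.degree + 1 then monomial (γ + Finsupp.single j 1) c else 0 := by
    intro n
    have := homogeneousComponent_of_mem (m := n) (n := γ.degree + 1)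
      (p := monomial (γ + Finsupp.single j 1) c)
      (isHomogeneous_monomial c (by simp))
    rw [this]
  simp only [hh, Finset.sum_ite_eq', Finset.mem_range]
  simp

lemma u_deg (γ : Fin d →₀ ℕ) (hγ : γ.degree ≤ N) : (u a γ).totalDegree ≤ N := by
  unfold u
  split_ifs
  · simp
  · exact (totalDegree_monomial_le _ _).trans hγ

lemma u_coeff_zero (γ : Fin d →₀ ℕ) : coeff 0 (u a γ) = 0 := by
  unfold u
  split_ifs with h
  · simp
  · simp [coeff_monomial, h]

lemma down_Tstar (hap : ∀ k, 0 < a k)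
    (T Tstar : Fin d → Module.End ℂ (MvPolynomial (Fin d) ℂ))
    (hT : ∀ (j : Fin d) (p : MvPolynomial (Fin d) ℂ),
      p.totalDegree ≤ N → MvPolynomial.coeff 0 p = 0 →
      T j p = ∑ n ∈ Finset.range (N + 1),
        MvPolynomial.homogeneousComponent n (MvPolynomial.X j * p))
    (hTstarMem : ∀ (j : Fin d) (p : MvPolynomial (Fin d) ℂ),
      p.totalDegree ≤ N → MvPolynomial.coeff 0 p = 0 →
      (Tstar j p).totalDegree ≤ N ∧ MvPolynomial.coeff 0 (Tstar j p) = 0)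
    (hTstar : ∀ (j : Fin d) (p q : MvPolynomial (Fin d) ℂ),
      p.totalDegree ≤ N → MvPolynomial.coeff 0 p = 0 →
      q.totalDegree ≤ N → MvPolynomial.coeff 0 q = 0 →
      uiInner d a (Tstar j p) q = uiInner d a p (T j q)) (j : Fin d) :
    Down N a (Tstar j) (Finsupp.single j 1) := by
  intro γ hγ
  obtain ⟨hm1, hm2⟩ := hTstarMem j (u a γ) (u_deg γ hγ) (u_coeff_zero γ)
  have hr1 : (if Finsupp.single j 1 ≤ γ then u a (γ - Finsupp.single j 1) else 0).totalDegree
      ≤ N := by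
    split_ifs
    · exact u_deg _ ((Finsupp.degree_mono tsub_le_self).trans hγ)
    · simp
  have hr2 : coeff 0 (if Finsupp.single j 1 ≤ γ then u a (γ - Finsupp.single j 1) else 0) = 0 := by
    split_ifs
    · exact u_coeff_zero _
    · simp
  ext β
  by_cases hβ0 : β = 0
  · rw [hβ0, hm2, hr2]
  by_cases hβN : N < β.degree
  · rw [coeff_eq_zero_of_totalDegree_lt, coeff_eq_zero_of_totalDegree_lt]
    · exact lt_of_le_of_lt hr1 hβN
    · exact lt_of_le_of_lt hm1 hβN
  push Not at hβN
  have key := hTstar j (u a γ) (monomial β 1) (u_deg γ hγ) (u_coeff_zero γ)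
    ((totalDegree_monomial_le _ _).trans hβN) (by simp [coeff_monomial, hβ0])
  rw [T_monomial T hT j β 1 hβ0 hβN, inner_monomial] at key
  have hw : ∀ α : Fin d →₀ ℕ, ((w a α : ℝ) : ℂ) ≠ 0 := fun α => by
    exact_mod_cast (w_pos hap α).ne'
  by_cases hg : γ = β + Finsupp.single j 1
  · have hd : β.degree + 1 ≤ N := by rw [hg] at hγ; simpa using hγ
    have hγ0 : γ ≠ 0 := by rw [hg]; simp [hβ0]
    rw [if_pos hd, inner_monomial, ← hg] at key
    have hs : Finsupp.single j 1 ≤ γ := by rw [hg]; exact le_add_self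
    have hsub : γ - Finsupp.single j 1 = β := by rw [hg]; simp
    have hub : coeff β (u a β) = (((w a β)⁻¹ : ℝ) : ℂ) := by simp [u, hβ0]
    rw [if_pos hs, hsub, hub]
    rw [show coeff γ (u a γ) = (((w a γ)⁻¹ : ℝ) : ℂ) by simp [u, hγ0]] at key
    rw [Complex.conj_ofReal, mul_one, mul_one, Complex.ofReal_inv, inv_mul_cancel₀ (hw γ)] at key
    have := eq_inv_of_mul_eq_one_left key
    have h2 := congrArg (starRingEnd ℂ) this
    rw [Complex.conj_conj] at h2
    rw [h2, ← Complex.ofReal_inv, Complex.conj_ofReal]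
  · have h1 : coeff β (Tstar j (u a γ)) = 0 := by
      have hz : uiInner d a (u a γ)
          (if β.degree + 1 ≤ N then monomial (β + Finsupp.single j 1) 1 else 0) = 0 := by
        split_ifs
        · rw [inner_monomial]
          have : coeff (β + Finsupp.single j 1) (u a γ) = 0 := by
            unfold u
            split_ifs
            · simp
            · rw [coeff_monomial, if_neg hg]
          simp [this]
        · exact inner_zero _ _
      rw [hz] at key
      simpa [hw β] using key
    rw [h1]
    split_ifs with hs
    · unfold u
      split_ifs with h3
      · simp
      · rw [coeff_monomial, if_neg]
        intro h4
        apply hg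
        rw [← h4, tsub_add_cancel_of_le hs]
    · simp

lemma vander (d : ℕ) (g : Fin d → ℕ) (n : ℕ) :
    ∑ α ∈ Finset.Nat.antidiagonalTuple d n, ∏ j, (g j).choose (α j) = (∑ j, g j).choose n := by
  induction d generalizing n with
  | zero =>
    cases n <;> simp
  | succ d ih =>
    rw [Fin.sum_univ_succ, Nat.add_choose_eq]
    simp_rw [← ih]
    have : Finset.Nat.antidiagonalTuple (d+1) n = (Finset.HasAntidiagonal.antidiagonal n).biUnion (fun ij =>
      (Finset.Nat.antidiagonalTuple d ij.2).image (fun x => (Fin.cons ij.1 x : Fin (d+1) → ℕ))) := by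
      ext α
      refine Fin.consCases (fun x α => ?_) α
      simp only [Finset.Nat.mem_antidiagonalTuple, Finset.mem_biUnion, Finset.mem_image,
        Finset.HasAntidiagonal.mem_antidiagonal, Fin.sum_univ_succ, Fin.cons_zero, Fin.cons_succ]
      constructor
      · intro h
        exact ⟨(x, ∑ i, α i), h, α, rfl, rfl⟩
      · rintro ⟨⟨i, k⟩, h, β, h2, h3⟩
        obtain ⟨rfl, rfl⟩ := Fin.cons_inj.mp h3
        simp_all
    rw [this, Finset.sum_biUnion]
    · refine Finset.sum_congr rfl fun ij _ => ?_
      rw [Finset.sum_image (fun x _ y _ h => (Fin.cons_inj.mp h).2), Finset.mul_sum]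
      refine Finset.sum_congr rfl fun x _ => ?_
      simp [Fin.prod_univ_succ]
    · intro x hx y hy hxy
      simp only [Function.onFun, Finset.disjoint_left, Finset.mem_image]
      rintro α ⟨β, _, rfl⟩ ⟨β', _, h⟩
      apply hxy
      have h1 := (Fin.cons_inj.mp h).1
      simp only [Finset.mem_coe,
        Finset.HasAntidiagonal.mem_antidiagonal] at hx hy
      ext <;> omega

lemma weight_identity (hap : ∀ k, 0 < a k) (γ : Fin d →₀ ℕ) (n : ℕ) (hn : n ≤ ∑ j, γ j)
    (α : Fin d → ℕ) (hα : ∑ j, α j = n) :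
    (Nat.multinomial Finset.univ α : ℝ) * (if Finsupp.equivFunOnFinite.symm α ≤ γ then
        w a γ / w a (γ - Finsupp.equivFunOnFinite.symm α) else 0)
      = (∏ j, (γ j).choose (α j) : ℕ) * (a (∑ j, γ j - n) / a (∑ j, γ j) /
        ((∑ j, γ j).choose n : ℝ)) := by
  split_ifs with h
  · have h' : ∀ j, α j ≤ γ j := fun j => h j
    have hs : ∑ j, (γ j - α j) = ∑ j, γ j - n := by
      rw [Finset.sum_tsub_distrib _ (fun j _ => h' j), hα]
    have e1 : (∏ j, (γ j).choose (α j)) * (∏ j, (α j).factorial) * (∏ j, (γ j - α j).factorial)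
        = ∏ j, (γ j).factorial := by
      rw [← Finset.prod_mul_distrib, ← Finset.prod_mul_distrib]
      exact Finset.prod_congr rfl fun j _ => Nat.choose_mul_factorial_mul_factorial (h' j)
    have e2 := Nat.choose_mul_factorial_mul_factorial hn
    have e3 := Nat.multinomial_spec Finset.univ α
    rw [hα] at e3
    have p1 : (∏ j, (α j).factorial : ℕ) ≠ 0 := Finset.prod_ne_zero_iff.2 fun j _ => Nat.factorial_ne_zero _
    have p2 : (∏ j, (γ j - α j).factorial : ℕ) ≠ 0 := Finset.prod_ne_zero_iff.2 fun j _ => Nat.factorial_ne_zero _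
    have p3 := (Nat.choose_pos hn).ne'
    have p4 := Nat.factorial_ne_zero n
    have p5 := Nat.factorial_ne_zero (∑ j, γ j - n)
    have p6 := (hap (∑ j, γ j)).ne'
    have p7 := (hap (∑ j, γ j - n)).ne'
    unfold w
    simp only [Finsupp.tsub_apply, Finsupp.equivFunOnFinite_symm_apply_apply, hs]
    rw [← e1, ← e2, ← e3]
    rw [← e3] at p4
    have p8 := left_ne_zero_of_mul p4
    have p9 := right_ne_zero_of_mul p4
    generalize ∏ j, (γ j).choose (α j) = x1 at *
    generalize ∏ j, (α j).factorial = x2 at *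
    generalize ∏ j, (γ j - α j).factorial = x3 at *
    generalize (∑ j, γ j).choose n = x4 at *
    generalize (∑ j, γ j - n).factorial = x5 at *
    generalize a (∑ j, γ j - n) = x6 at *
    generalize a (∑ j, γ j) = x7 at *
    generalize Nat.multinomial Finset.univ α = x8 at *
    push_cast
    have q2 : (x2 : ℝ) ≠ 0 := by exact_mod_cast p1
    have q3 : (x3 : ℝ) ≠ 0 := by exact_mod_cast p2
    have q4 : (x4 : ℝ) ≠ 0 := by exact_mod_cast p3
    have q5 : (x5 : ℝ) ≠ 0 := by exact_mod_cast p5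
    have q8 : (x8 : ℝ) ≠ 0 := by first | exact_mod_cast p8 | exact_mod_cast p9
    field_simp
  · have : ∃ j, γ j < α j := by
      by_contra hc
      push Not at hc
      exact h fun j => hc j
    obtain ⟨j, hj⟩ := this
    rw [Finset.prod_eq_zero (Finset.mem_univ j) (Nat.choose_eq_zero_of_lt hj)]
    simp

lemma weight_sum (hap : ∀ k, 0 < a k) (γ : Fin d →₀ ℕ) (n : ℕ) (hn : n ≤ ∑ j, γ j) :
    ∑ α ∈ Finset.Nat.antidiagonalTuple d n,
    (Nat.multinomial Finset.univ α : ℝ) * (if Finsupp.equivFunOnFinite.symm α ≤ γ then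
        w a γ / w a (γ - Finsupp.equivFunOnFinite.symm α) else 0)
      = a (∑ j, γ j - n) / a (∑ j, γ j) := by
  rw [Finset.sum_congr rfl fun α hα => weight_identity hap γ n hn α
    (Finset.Nat.mem_antidiagonalTuple.1 hα), ← Finset.sum_mul, ← Nat.cast_sum, vander]
  have : ((∑ j, γ j).choose n : ℝ) ≠ 0 := by exact_mod_cast (Nat.choose_pos hn).ne'
  field_simp

lemma monomial_eq (hap : ∀ k, 0 < a k) (γ : Fin d →₀ ℕ) (h0 : γ ≠ 0) (c : ℂ) :
    monomial γ c = (c * ((w a γ : ℝ) : ℂ)) • u a γ := by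
  have hw : ((w a γ : ℝ) : ℂ) ≠ 0 := by exact_mod_cast (w_pos hap γ).ne'
  rw [u, if_neg h0, smul_monomial, smul_eq_mul, Complex.ofReal_inv, mul_assoc,
    mul_inv_cancel₀ hw, mul_one]

/-- action of a single term on a monomial -/
lemma term_apply (hap : ∀ k, 0 < a k) {A B : Module.End ℂ (MvPolynomial (Fin d) ℂ)}
    {s : Fin d →₀ ℕ} (hA : Up N A s) (hB : Down N a B s) (γ : Fin d →₀ ℕ) (c : ℂ)
    (h0 : γ ≠ 0) (hγ : γ.degree ≤ N) :
    A (B (monomial γ c)) = (((if s.degree < γ.degree then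
      (if s ≤ γ then w a γ / w a (γ - s) else 0) else 0 : ℝ)) : ℂ) • monomial γ c := by
  rw [monomial_eq hap γ h0 c, map_smul, hB γ hγ]
  by_cases hs : s ≤ γ
  · have hadd : γ - s + s = γ := tsub_add_cancel_of_le hs
    have hdeg : (γ - s).degree + s.degree = γ.degree := by rw [← map_add, hadd]
    rw [if_pos hs, if_pos hs]
    by_cases he : γ - s = 0
    · have : ¬ s.degree < γ.degree := by
        rw [he, map_zero] at hdeg; omega
      rw [if_neg this, he]
      simp [u]
    · have hpos : s.degree < γ.degree := by
        have : (γ - s).degree ≠ 0 := by rwa [Ne, Finsupp.degree_eq_zero_iff]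
        omega
      rw [if_pos hpos]
      rw [← monomial_eq hap γ h0 c]
      rw [u, if_neg he, map_smul, hA _ _ he (by omega), hadd, smul_monomial, smul_monomial]
      congr 1
      simp only [smul_eq_mul]
      push_cast
      ring
  · rw [if_neg hs, if_neg hs]
    simp

end UI

/-- Let `T` be the compression of the multiplication tuple to the space `(P_N)₀` of
polynomials of degree at most `N` vanishing at `0`, and `Tstar` its adjoint there.
Then for every homogeneous `p` of degree `m` with `1 ≤ m ≤ N`,
`(I - ∑_{n=1}^N bₙ ∑_{|α|=n} (n!/α!) Tᵅ(T*)ᵅ) p = (b_m/a_m) p`; in particular, if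
this operator is positive semidefinite then `bₙ ≥ 0` for `1 ≤ n ≤ N`. -/
theorem stmt_19 (d N : ℕ) (hd : 0 < d) (a b : ℕ → ℝ) (ha0 : a 0 = 1) (hap : ∀ k, 0 < a k)
    (hconv : ∀ m : ℕ, 1 ≤ m → a m = ∑ n ∈ Finset.Icc 1 m, b n * a (m - n))
    (T Tstar : Fin d → Module.End ℂ (MvPolynomial (Fin d) ℂ))
    (hT : ∀ (j : Fin d) (p : MvPolynomial (Fin d) ℂ),
      p.totalDegree ≤ N → MvPolynomial.coeff 0 p = 0 →
      T j p = ∑ n ∈ Finset.range (N + 1),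
        MvPolynomial.homogeneousComponent n (MvPolynomial.X j * p))
    (hTstarMem : ∀ (j : Fin d) (p : MvPolynomial (Fin d) ℂ),
      p.totalDegree ≤ N → MvPolynomial.coeff 0 p = 0 →
      (Tstar j p).totalDegree ≤ N ∧ MvPolynomial.coeff 0 (Tstar j p) = 0)
    (hTstar : ∀ (j : Fin d) (p q : MvPolynomial (Fin d) ℂ),
      p.totalDegree ≤ N → MvPolynomial.coeff 0 p = 0 →
      q.totalDegree ≤ N → MvPolynomial.coeff 0 q = 0 →
      uiInner d a (Tstar j p) q = uiInner d a p (T j q)) :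
    (∀ (m : ℕ) (p : MvPolynomial (Fin d) ℂ), 1 ≤ m → m ≤ N → p.IsHomogeneous m →
      p - ∑ n ∈ Finset.Icc 1 N, ((b n : ℝ) : ℂ) •
          ∑ α ∈ Finset.Nat.antidiagonalTuple d n,
            (Nat.multinomial Finset.univ α : ℂ) •
              ((List.ofFn fun j => T j ^ α j).prod
                ((List.ofFn fun j => Tstar j ^ α j).prod p))
        = (((b m / a m : ℝ)) : ℂ) • p) ∧
    ((∀ p : MvPolynomial (Fin d) ℂ, p.totalDegree ≤ N → MvPolynomial.coeff 0 p = 0 →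
        0 ≤ uiInner d a
          (p - ∑ n ∈ Finset.Icc 1 N, ((b n : ℝ) : ℂ) •
            ∑ α ∈ Finset.Nat.antidiagonalTuple d n,
              (Nat.multinomial Finset.univ α : ℂ) •
                ((List.ofFn fun j => T j ^ α j).prod
                  ((List.ofFn fun j => Tstar j ^ α j).prod p))) p) →
      ∀ n : ℕ, 1 ≤ n → n ≤ N → 0 ≤ b n) := by
  have hdeg : ∀ γ : Fin d →₀ ℕ, γ.degree = ∑ j, γ j := fun γ => Finsupp.degree_eq_sum γ
  have hdown : ∀ α : Fin d → ℕ, UI.Down N a (List.ofFn fun j => Tstar j ^ α j).prod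
      (Finsupp.equivFunOnFinite.symm α) := by
    intro α
    rw [← UI.shift_sum, List.ofFn_eq_map]
    exact UI.Down.list
      (fun j => (UI.down_Tstar hap T Tstar hT hTstarMem hTstar j).pow (α j)) _
  have hup : ∀ α : Fin d → ℕ, UI.Up N (List.ofFn fun j => T j ^ α j).prod
      (Finsupp.equivFunOnFinite.symm α) := by
    intro α
    rw [← UI.shift_sum, List.ofFn_eq_map]
    refine UI.Up.list (fun j => UI.Up.pow ?_ (α j)) _
    intro γ c h0 hγ
    rw [Finsupp.degree_single] at hγ
    rw [UI.T_monomial T hT j γ c h0 (by omega), if_pos hγ]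
  have hmono : ∀ (m : ℕ) (γ : Fin d →₀ ℕ) (c : ℂ), 1 ≤ m → m ≤ N → γ.degree = m →
      MvPolynomial.monomial γ c - ∑ n ∈ Finset.Icc 1 N, ((b n : ℝ) : ℂ) •
          ∑ α ∈ Finset.Nat.antidiagonalTuple d n,
            (Nat.multinomial Finset.univ α : ℂ) •
              ((List.ofFn fun j => T j ^ α j).prod
                ((List.ofFn fun j => Tstar j ^ α j).prod (MvPolynomial.monomial γ c)))
        = (((b m / a m : ℝ)) : ℂ) • MvPolynomial.monomial γ c := by
    intro m γ c hm1 hmN hγ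
    have h0 : γ ≠ 0 := by
      rintro rfl
      simp at hγ
      omega
    have hin : ∀ n, ∑ α ∈ Finset.Nat.antidiagonalTuple d n,
            (Nat.multinomial Finset.univ α : ℂ) •
              ((List.ofFn fun j => T j ^ α j).prod
                ((List.ofFn fun j => Tstar j ^ α j).prod (MvPolynomial.monomial γ c)))
        = ((if n < m then a (m - n) / a m else 0 : ℝ) : ℂ) • MvPolynomial.monomial γ c := by
      intro n
      have hterm : ∀ α ∈ Finset.Nat.antidiagonalTuple d n,
          (Nat.multinomial Finset.univ α : ℂ) •
              ((List.ofFn fun j => T j ^ α j).prod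
                ((List.ofFn fun j => Tstar j ^ α j).prod (MvPolynomial.monomial γ c)))
          = (((if n < m then (Nat.multinomial Finset.univ α : ℝ) *
              (if Finsupp.equivFunOnFinite.symm α ≤ γ then
              UI.w a γ / UI.w a (γ - Finsupp.equivFunOnFinite.symm α) else 0) else 0 : ℝ)) : ℂ) •
              MvPolynomial.monomial γ c := by
        intro α hα
        have hs : (Finsupp.equivFunOnFinite.symm α : Fin d →₀ ℕ).degree = n := by
          rw [hdeg]
          simpa using Finset.Nat.mem_antidiagonalTuple.1 hα
        rw [UI.term_apply hap (hup α) (hdown α) γ c h0 (by omega), hs, hγ, smul_smul]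
        congr 1
        split_ifs <;> push_cast <;> simp
      rw [Finset.sum_congr rfl hterm, ← Finset.sum_smul, ← Complex.ofReal_sum]
      congr 2
      split_ifs with hn
      · have hgm : ∑ j, γ j = m := by rw [← hdeg, hγ]
        have := UI.weight_sum hap γ n (by rw [hgm]; omega)
        rw [hgm] at this
        exact this
      · simp
    simp_rw [hin, smul_smul]
    rw [← Finset.sum_smul]
    have hone : (MvPolynomial.monomial γ c : MvPolynomial (Fin d) ℂ)
        = (1 : ℂ) • MvPolynomial.monomial γ c := (one_smul _ _).symm
    nth_rw 1 [hone]
    rw [← sub_smul]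
    congr 1
    have hreal : (1 : ℝ) - ∑ n ∈ Finset.Icc 1 N, b n * (if n < m then a (m - n) / a m else 0)
        = b m / a m := by
      have ham := (hap m).ne'
      have hsub : ∑ n ∈ Finset.Icc 1 N, b n * (if n < m then a (m - n) / a m else 0)
          = ∑ n ∈ Finset.Icc 1 m, b n * (if n < m then a (m - n) / a m else 0) := by
        symm
        apply Finset.sum_subset (Finset.Icc_subset_Icc_right hmN)
        intro n h1 h2
        rw [Finset.mem_Icc] at h1 h2
        rw [if_neg (by omega), mul_zero]
      obtain ⟨k, rfl⟩ : ∃ k, m = k + 1 := ⟨m - 1, by omega⟩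
      have hc := hconv (k + 1) hm1
      rw [Finset.sum_Icc_succ_top (by omega)] at hc
      rw [hsub, Finset.sum_Icc_succ_top (by omega)]
      have : ∑ n ∈ Finset.Icc 1 k, b n * (if n < k + 1 then a (k + 1 - n) / a (k + 1) else 0)
          = (∑ n ∈ Finset.Icc 1 k, b n * a (k + 1 - n)) / a (k + 1) := by
        rw [Finset.sum_div]
        refine Finset.sum_congr rfl fun n hn => ?_
        rw [Finset.mem_Icc] at hn
        rw [if_pos (by omega), mul_div_assoc]
      rw [this]
      simp only [Nat.sub_self, ha0, mul_one] at hc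
      simp only [lt_irrefl, if_false, mul_zero, add_zero]
      field_simp
      linarith
    rw [← hreal]
    push_cast
    rfl
  have main : ∀ (m : ℕ) (p : MvPolynomial (Fin d) ℂ), 1 ≤ m → m ≤ N → p.IsHomogeneous m →
      p - ∑ n ∈ Finset.Icc 1 N, ((b n : ℝ) : ℂ) •
          ∑ α ∈ Finset.Nat.antidiagonalTuple d n,
            (Nat.multinomial Finset.univ α : ℂ) •
              ((List.ofFn fun j => T j ^ α j).prod
                ((List.ofFn fun j => Tstar j ^ α j).prod p))
        = (((b m / a m : ℝ)) : ℂ) • p := by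
    intro m p hm1 hmN hp
    let L : Module.End ℂ (MvPolynomial (Fin d) ℂ) :=
      1 - ∑ n ∈ Finset.Icc 1 N, ((b n : ℝ) : ℂ) •
          ∑ α ∈ Finset.Nat.antidiagonalTuple d n,
            (Nat.multinomial Finset.univ α : ℂ) •
              ((List.ofFn fun j => T j ^ α j).prod *
                (List.ofFn fun j => Tstar j ^ α j).prod)
    have hL : ∀ q, L q = q - ∑ n ∈ Finset.Icc 1 N, ((b n : ℝ) : ℂ) •
          ∑ α ∈ Finset.Nat.antidiagonalTuple d n,
            (Nat.multinomial Finset.univ α : ℂ) •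
              ((List.ofFn fun j => T j ^ α j).prod
                ((List.ofFn fun j => Tstar j ^ α j).prod q)) := by
      intro q
      simp only [L, LinearMap.sub_apply, Module.End.one_apply, LinearMap.sum_apply,
        LinearMap.smul_apply, Module.End.mul_apply]
    rw [← hL]
    have hsum := p.as_sum
    rw [hsum, map_sum, Finset.smul_sum]
    refine Finset.sum_congr rfl fun γ hγ => ?_
    rw [hL]
    refine hmono m γ _ hm1 hmN ?_
    have := hp (MvPolynomial.mem_support_iff.1 hγ)
    rw [← this, Finsupp.degree_eq_weight_one]
    rfl
  refine ⟨main, ?_⟩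
  intro hpos n hn1 hnN
  have hγ : (Finsupp.single (⟨0, hd⟩ : Fin d) n).degree = n := by simp
  have h0 : Finsupp.single (⟨0, hd⟩ : Fin d) n ≠ 0 := by
    simp; omega
  have h := hpos (MvPolynomial.monomial (Finsupp.single (⟨0, hd⟩ : Fin d) n) 1)
    ((MvPolynomial.totalDegree_monomial_le _ _).trans (by rw [← hγ] at hnN; exact hnN))
    (by rw [MvPolynomial.coeff_monomial, if_neg h0])
  rw [main n _ hn1 hnN (MvPolynomial.isHomogeneous_monomial 1 hγ), UI.inner_monomial,
    MvPolynomial.coeff_smul, MvPolynomial.coeff_monomial, if_pos rfl, smul_eq_mul, mul_one,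
    mul_one, Complex.conj_ofReal, ← Complex.ofReal_mul] at h
  have h' : 0 ≤ b n / a n * UI.w a (Finsupp.single (⟨0, hd⟩ : Fin d) n) := by
    exact_mod_cast h
  have h2 := nonneg_of_mul_nonneg_left h' (UI.w_pos hap _)
  by_contra hneg
  push Not at hneg
  exact absurd h2 (not_le.2 (div_neg_of_neg_of_pos hneg (hap n)))
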